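/- Let (R, m) be a commutative Noetherian local ring and M an R-module of Krull dimension n (not necessarily finitely generated) such that H^n_m(M) is an Artinian R-module. Then H^n_I(M) is an Artinian R-module for every ideal I of R. -/

import Mathlib

universe u

open CategoryTheory

/-- The cohomological dimension of `M` with respect to `I`:
`cd(I,M) = sup { i ∈ ℕ | H^i_I(M) ≠ 0 }`, as an element of `ℕ∞`. -/
noncomputable def cohomologicalDimension {R : Type u} [CommRing R] (I : Ideal R)
    (M : ModuleCat.{u} R) : ℕ∞ :=
  sSup {c : ℕ∞ | ∃ i : ℕ, c = i ∧ Nontrivial ((localCohomology I i).obj M)}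

/-!
Write `H^n_I(M)` as the cokernel of `Γ_I(E) → Γ_I(N)` for a map `g : E → N` with `E` injective,
obtained by dimension shifting and therefore independent of `I`. By Grothendieck vanishing applied
at every prime, the support of `H^n_I(M)` consists of primes `p` with `dim M_p ≥ n`; if `n` is the
dimension of `M` over a local ring, only the maximal ideal remains, so every element `x` of the
maximal ideal acts locally nilpotently on `H^n_I(M)`. A class represented by `w ∈ Γ_I(N)` then
satisfies `x ^ k • w = g y` with `y ∈ Γ_I(E)`. Over a Noetherian ring `Γ_I(E)` is injective, so `y`
is divisible by `x ^ k` up to `x`-power torsion, and correcting `w` by the image of the quotient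
moves it into the torsion submodule of `I + (x)`. Thus `H^n_I(M)` is a quotient of
`H^n_{I + (x)}(M)`, and Noetherian induction on `I` reduces the claim to the maximal ideal.
-/

noncomputable section

open Limits Opposite

section LeftDerived

variable {C D : Type*} [Category* C] [Category* D] [Abelian C] [Abelian D]

lemma exact_mk₂_of_iso {A₁ A₂ A₃ B₁ B₂ B₃ : D} {f : A₁ ⟶ A₂} {g : A₂ ⟶ A₃} {f' : B₁ ⟶ B₂}
    {g' : B₂ ⟶ B₃} (h : (ComposableArrows.mk₂ f' g').Exact) (e₁ : A₁ ≅ B₁) (e₂ : A₂ ≅ B₂)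
    (e₃ : A₃ ≅ B₃) (hf : f ≫ e₂.hom = e₁.hom ≫ f') (hg : g ≫ e₃.hom = e₂.hom ≫ g') :
    (ComposableArrows.mk₂ f g).Exact :=
  (ComposableArrows.exact_iff_of_iso (ComposableArrows.isoMk₂ e₁ e₂ e₃ hf hg)).2 h

/-- A short complex of functors `S` is short exact on projectives if `S(P)` is a short exact
sequence for every projective object `P`. -/
def ShortExactOnProjectives (S : ShortComplex (C ⥤ D)) : Prop :=
  ∀ (P : C) [Projective P], (S.map ((evaluation C D).obj P)).ShortExact

section Degreewise

variable (S : ShortComplex (C ⥤ D)) [S.X₁.Additive] [S.X₂.Additive] [S.X₃.Additive]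
  {ι : Type*} {c : ComplexShape ι}

/-- The short complex of complexes obtained by applying a short complex of additive functors
degreewise to a complex. -/
abbrev degreewise (K : HomologicalComplex C c) : ShortComplex (HomologicalComplex D c) where
  f := (NatTrans.mapHomologicalComplex S.f c).app K
  g := (NatTrans.mapHomologicalComplex S.g c).app K
  zero := by ext i; exact NatTrans.congr_app S.zero (K.X i)

/-- The functoriality of `degreewise` in the complex. -/
abbrev degreewiseMap {K L : HomologicalComplex C c} (φ : K ⟶ L) :
    degreewise S K ⟶ degreewise S L where
  τ₁ := (S.X₁.mapHomologicalComplex c).map φ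
  τ₂ := (S.X₂.mapHomologicalComplex c).map φ
  τ₃ := (S.X₃.mapHomologicalComplex c).map φ

variable {S}

lemma ShortExactOnProjectives.shortExact_degreewise (hS : ShortExactOnProjectives S) {X : C}
    (P : ProjectiveResolution X) : (degreewise S P.complex).ShortExact :=
  HomologicalComplex.shortExact_of_degreewise_shortExact _ fun i => hS (P.complex.X i)

end Degreewise

variable [HasProjectiveResolutions C]

/-- The left derived functors of `F` at `X` as the homology of `F` applied to the chosen projective
resolution of `X`: `ProjectiveResolution.isoLeftDerivedObj` with its target in `homology` form. -/
def leftDerivedObjIso (F : C ⥤ D) [F.Additive] (X : C) (n : ℕ) :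
    (F.leftDerived n).obj X ≅
      ((F.mapHomologicalComplex _).obj (projectiveResolution X).complex).homology n :=
  (projectiveResolution X).isoLeftDerivedObj F n

lemma exists_leftDerived_map_comp_leftDerivedObjIso_hom {X Y : C} (f : X ⟶ Y) :
    ∃ φ : (projectiveResolution X).complex ⟶ (projectiveResolution Y).complex,
      ∀ (F : C ⥤ D) [F.Additive] (n : ℕ),
        (F.leftDerived n).map f ≫ (leftDerivedObjIso F Y n).hom =
          (leftDerivedObjIso F X n).hom ≫
            HomologicalComplex.homologyMap ((F.mapHomologicalComplex _).map φ) n :=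
  ⟨ProjectiveResolution.lift f _ _, fun F _ n =>
    ProjectiveResolution.isoLeftDerivedObj_hom_naturality f _ _ _
      (ProjectiveResolution.lift_commutes_zero _ _ _) F n⟩

lemma leftDerived_app_comp_leftDerivedObjIso_hom {F G : C ⥤ D} [F.Additive] [G.Additive]
    (α : F ⟶ G) (X : C) (n : ℕ) :
    (NatTrans.leftDerived α n).app X ≫ (leftDerivedObjIso G X n).hom =
      (leftDerivedObjIso F X n).hom ≫ HomologicalComplex.homologyMap
        ((NatTrans.mapHomologicalComplex α _).app (projectiveResolution X).complex) n := by
  rw [← Iso.eq_comp_inv, Category.assoc]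
  exact ProjectiveResolution.leftDerived_app_eq α _ n

namespace ShortExactOnProjectives

variable {S : ShortComplex (C ⥤ D)} [S.X₁.Additive] [S.X₂.Additive] [S.X₃.Additive]

/-- The connecting morphism between left derived functors. -/
def δ (hS : ShortExactOnProjectives S) (n : ℕ) :
    S.X₃.leftDerived (n + 1) ⟶ S.X₁.leftDerived n where
  app X := (leftDerivedObjIso S.X₃ X (n + 1)).hom ≫
    (hS.shortExact_degreewise (projectiveResolution X)).δ (n + 1) n (by simp) ≫
      (leftDerivedObjIso S.X₁ X n).inv
  naturality X Y f := by
    obtain ⟨φ, hφ⟩ := exists_leftDerived_map_comp_leftDerivedObjIso_hom (D := D) f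
    have hδ := HomologicalComplex.HomologySequence.δ_naturality
      (degreewiseMap S φ) (hS.shortExact_degreewise _) (hS.shortExact_degreewise _)
      (n + 1) n (by simp)
    rw [← cancel_mono (leftDerivedObjIso S.X₁ Y n).hom]
    simp only [Category.assoc, Iso.inv_hom_id, Category.comp_id, hφ, Iso.inv_hom_id_assoc]
    rw [← Category.assoc, hφ, Category.assoc]
    exact congr_arg _ hδ.symm

lemma δ_app_comp_leftDerivedObjIso_hom (hS : ShortExactOnProjectives S) (X : C) (n : ℕ) :
    (hS.δ n).app X ≫ (leftDerivedObjIso S.X₁ X n).hom =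
      (leftDerivedObjIso S.X₃ X (n + 1)).hom ≫
        (hS.shortExact_degreewise (projectiveResolution X)).δ (n + 1) n (by simp) := by
  simp [δ]

lemma exact_app_app (hS : ShortExactOnProjectives S) (X : C) (n : ℕ) :
    (ComposableArrows.mk₂ ((NatTrans.leftDerived S.f n).app X)
      ((NatTrans.leftDerived S.g n).app X)).Exact :=
  exact_mk₂_of_iso ((hS.shortExact_degreewise _).homology_exact₂ n).exact_toComposableArrows _ _ _
    (leftDerived_app_comp_leftDerivedObjIso_hom S.f X n)
    (leftDerived_app_comp_leftDerivedObjIso_hom S.g X n)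

lemma exact_δ_app (hS : ShortExactOnProjectives S) (X : C) (n : ℕ) :
    (ComposableArrows.mk₂ ((hS.δ n).app X) ((NatTrans.leftDerived S.f n).app X)).Exact :=
  exact_mk₂_of_iso
    ((hS.shortExact_degreewise _).homology_exact₁ (n + 1) n (by simp)).exact_toComposableArrows
    _ _ _
    (hS.δ_app_comp_leftDerivedObjIso_hom X n) (leftDerived_app_comp_leftDerivedObjIso_hom S.f X n)

lemma exact_app_δ (hS : ShortExactOnProjectives S) (X : C) (n : ℕ) :
    (ComposableArrows.mk₂ ((NatTrans.leftDerived S.g (n + 1)).app X) ((hS.δ n).app X)).Exact :=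
  exact_mk₂_of_iso
    ((hS.shortExact_degreewise _).homology_exact₃ (n + 1) n (by simp)).exact_toComposableArrows
    _ _ _
    (leftDerived_app_comp_leftDerivedObjIso_hom S.g X (n + 1))
    (hS.δ_app_comp_leftDerivedObjIso_hom X n)

end ShortExactOnProjectives

end LeftDerived

section Ext

lemma exact_mk₂_unop {C : Type*} [Category* C] [Abelian C] {X Y Z : Cᵒᵖ} {f : X ⟶ Y} {g : Y ⟶ Z}
    (h : (ComposableArrows.mk₂ f g).Exact) : (ComposableArrows.mk₂ g.unop f.unop).Exact :=
  (h.exact 0).unop.exact_toComposableArrows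

lemma homologyMap_eq_app {D : Type*} [Category* D] [Abelian D] (ρ : 𝟭 D ⟶ 𝟭 D) {ι : Type*}
    {c : ComplexShape ι} {K : HomologicalComplex D c} {φ : K ⟶ K}
    (hφ : ∀ i, φ.f i = ρ.app (K.X i)) (i : ι) :
    HomologicalComplex.homologyMap φ i = ρ.app (K.homology i) := by
  have h : HomologicalComplex.cyclesMap φ i = ρ.app (K.cycles i) := by
    rw [← cancel_mono (K.iCycles i), HomologicalComplex.cyclesMap_i, hφ]
    exact ρ.naturality (K.iCycles i)
  rw [← cancel_epi (K.homologyπ i), HomologicalComplex.homologyπ_naturality, h]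
  exact (ρ.naturality (K.homologyπ i)).symm

lemma leftDerived_app_eq_app {C D : Type*} [Category* C] [Category* D] [Abelian C] [Abelian D]
    [HasProjectiveResolutions C] (ρ : 𝟭 D ⟶ 𝟭 D) {F : C ⥤ D} [F.Additive] {α : F ⟶ F}
    (hα : ∀ X, α.app X = ρ.app (F.obj X)) (X : C) (n : ℕ) :
    (NatTrans.leftDerived α n).app X = ρ.app ((F.leftDerived n).obj X) := by
  rw [← cancel_mono (leftDerivedObjIso F X n).hom, leftDerived_app_comp_leftDerivedObjIso_hom,
    homologyMap_eq_app ρ fun i => hα _]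
  exact ρ.naturality (leftDerivedObjIso F X n).hom

variable (R : Type*) [CommRing R] {C : Type*} [Category* C] [Abelian C] [Linear R C]

/-- The functors `Hom(-, S.X₃)`, `Hom(-, S.X₂)`, `Hom(-, S.X₁)` with values in the opposite of the
category of modules; `Ext` is by definition the left derived functor of `Hom` in this form. -/
abbrev linearYonedaRightOp (S : ShortComplex C) : ShortComplex (C ⥤ (ModuleCat R)ᵒᵖ) where
  X₁ := ((linearYoneda R C).obj S.X₃).rightOp
  X₂ := ((linearYoneda R C).obj S.X₂).rightOp
  X₃ := ((linearYoneda R C).obj S.X₁).rightOp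
  f := NatTrans.rightOp ((linearYoneda R C).map S.g)
  g := NatTrans.rightOp ((linearYoneda R C).map S.f)
  zero := by
    rw [← NatTrans.rightOp_comp, ← Functor.map_comp, S.zero, Functor.map_zero]
    rfl

variable {S : ShortComplex C}

lemma shortExactOnProjectives_linearYonedaRightOp (hS : S.ShortExact) :
    ShortExactOnProjectives (linearYonedaRightOp R S) := by
  intro P _
  have := hS.mono_f
  have := hS.epi_g
  have h : ((S.map (linearYoneda R C)).map ((evaluation _ _).obj (op P))).ShortExact :=
    { exact := (ShortComplex.moduleCat_exact_iff _).2 fun (x : P ⟶ S.X₂) hx =>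
        ⟨hS.exact.lift x hx, hS.exact.lift_f x hx⟩
      mono_f := (ModuleCat.mono_iff_injective _).2 fun (x y : P ⟶ S.X₁) => (cancel_mono S.f).1
      epi_g := (ModuleCat.epi_iff_surjective _).2 fun (x : P ⟶ S.X₃) =>
        ⟨Projective.factorThru x S.g, Projective.factorThru_comp x S.g⟩ }
  exact h.op

variable [EnoughProjectives C]

/-- The connecting morphism of the long exact sequence of `Ext` in the second variable. -/
def extδ (hS : S.ShortExact) (n : ℕ) :
    (Ext R C n).flip.obj S.X₃ ⟶ (Ext R C (n + 1)).flip.obj S.X₁ :=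
  NatTrans.leftOp ((shortExactOnProjectives_linearYonedaRightOp R hS).δ n)

lemma ext_exact_δ_map (hS : S.ShortExact) (n : ℕ) (X : Cᵒᵖ) :
    (ComposableArrows.mk₂ ((extδ R hS n).app X)
      (((Ext R C (n + 1)).flip.map S.f).app X)).Exact :=
  exact_mk₂_unop ((shortExactOnProjectives_linearYonedaRightOp R hS).exact_app_δ X.unop n)

lemma ext_exact_map_map (hS : S.ShortExact) (n : ℕ) (X : Cᵒᵖ) :
    (ComposableArrows.mk₂ (((Ext R C n).flip.map S.f).app X)
      (((Ext R C n).flip.map S.g).app X)).Exact :=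
  exact_mk₂_unop ((shortExactOnProjectives_linearYonedaRightOp R hS).exact_app_app X.unop n)

lemma ext_exact_map_δ (hS : S.ShortExact) (n : ℕ) (X : Cᵒᵖ) :
    (ComposableArrows.mk₂ (((Ext R C n).flip.map S.g).app X) ((extδ R hS n).app X)).Exact :=
  exact_mk₂_unop ((shortExactOnProjectives_linearYonedaRightOp R hS).exact_δ_app X.unop n)

variable {R}

lemma ext_map_smul_id (r : R) (n : ℕ) (X : Cᵒᵖ) (Y : C) :
    ((Ext R C n).obj X).map (r • 𝟙 Y) = r • 𝟙 _ := by
  let ρ : 𝟭 (ModuleCat R)ᵒᵖ ⟶ 𝟭 (ModuleCat R)ᵒᵖ :=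
    { app M := (r • 𝟙 M.unop).op
      naturality _ _ _ := Quiver.Hom.unop_inj (by simp) }
  refine Quiver.Hom.op_inj (leftDerived_app_eq_app ρ
    (α := NatTrans.rightOp ((linearYoneda R C).map (r • 𝟙 Y))) (fun Z => ?_) X.unop n)
  refine Quiver.Hom.unop_inj (ModuleCat.hom_ext (LinearMap.ext fun (x : Z ⟶ Y) => ?_))
  change x ≫ (r • 𝟙 Y) = r • x
  simp

variable (R) in
lemma isZero_ext_succ_of_injective (n : ℕ) (X : Cᵒᵖ) (E : C) [Injective E] :
    IsZero (((Ext R C (n + 1)).obj X).obj E) := by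
  refine IsZero.of_iso ?_ ((projectiveResolution X.unop).isoExt (n + 1) E)
  rw [← HomologicalComplex.exactAt_iff_isZero_homology,
    HomologicalComplex.exactAt_iff' _ n (n + 1) (n + 2) (by simp) (by simp),
    ShortComplex.moduleCat_exact_iff]
  intro (x : (projectiveResolution X.unop).complex.X (n + 1) ⟶ E) hx
  have hP := (projectiveResolution X.unop).complex_exactAt_succ n
  rw [HomologicalComplex.exactAt_iff' _ (n + 2) (n + 1) n (by simp) (by simp)] at hP
  exact ⟨hP.descToInjective x hx, hP.comp_descToInjective x hx⟩

end Ext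

section ExtZero

lemma opcyclesMap_comp_fromLeftDerivedZero' {C D : Type*} [Category* C] [Category* D] [Abelian C]
    [Abelian D] {F G : C ⥤ D} [F.Additive] [G.Additive] (α : F ⟶ G) {X : C}
    (P : ProjectiveResolution X) :
    HomologicalComplex.opcyclesMap ((NatTrans.mapHomologicalComplex α _).app P.complex) 0 ≫
      P.fromLeftDerivedZero' G = P.fromLeftDerivedZero' F ≫ α.app X := by
  rw [← cancel_epi (HomologicalComplex.pOpcycles _ _), HomologicalComplex.p_opcyclesMap_assoc]
  erw [ProjectiveResolution.pOpcycles_comp_fromLeftDerivedZero',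
    ProjectiveResolution.pOpcycles_comp_fromLeftDerivedZero'_assoc]
  exact (α.naturality _).symm

lemma leftDerived_zero_comp_fromLeftDerivedZero {C D : Type*} [Category* C] [Category* D]
    [Abelian C] [Abelian D] [HasProjectiveResolutions C] {F G : C ⥤ D} [F.Additive] [G.Additive]
    (α : F ⟶ G) :
    NatTrans.leftDerived α 0 ≫ G.fromLeftDerivedZero = F.fromLeftDerivedZero ≫ α := by
  have key (F : C ⥤ D) [F.Additive] (X : C) : F.fromLeftDerivedZero.app X =
      (leftDerivedObjIso F X 0).hom ≫
        ((F.mapHomologicalComplex _).obj (projectiveResolution X).complex).homologyι 0 ≫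
          (projectiveResolution X).fromLeftDerivedZero' F :=
    (projectiveResolution X).fromLeftDerivedZero_eq F
  ext X
  rw [NatTrans.comp_app, NatTrans.comp_app, key, key, ← Category.assoc,
    leftDerived_app_comp_leftDerivedObjIso_hom]
  simp only [Category.assoc]
  rw [← opcyclesMap_comp_fromLeftDerivedZero' α, HomologicalComplex.homologyι_naturality_assoc]

variable (R : Type*) [CommRing R] {C : Type*} [Category* C] [Abelian C] [Linear R C]

instance (Y : C) : PreservesFiniteColimits ((linearYoneda R C).obj Y).rightOp :=
  have : PreservesFiniteLimits ((linearYoneda R C).obj Y ⋙ forget _) :=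
    inferInstanceAs (PreservesFiniteLimits (yoneda.obj Y))
  have := preservesFiniteLimits_of_reflects_of_preserves ((linearYoneda R C).obj Y) (forget _)
  preservesFiniteColimits_rightOp _

variable [EnoughProjectives C]

/-- The identification of `Hom(-, Y)` with `Ext^0(-, Y)`. -/
def homIsoExtZero (Y : C) : (linearYoneda R C).obj Y ≅ (Ext R C 0).flip.obj Y where
  hom := NatTrans.leftOp ((linearYoneda R C).obj Y).rightOp.leftDerivedZeroIsoSelf.hom
  inv := NatTrans.leftOp ((linearYoneda R C).obj Y).rightOp.leftDerivedZeroIsoSelf.inv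
  hom_inv_id := (NatTrans.leftOp_comp _ _).symm.trans
    (congr_arg NatTrans.leftOp (Iso.inv_hom_id _))
  inv_hom_id := (NatTrans.leftOp_comp _ _).symm.trans
    (congr_arg NatTrans.leftOp (Iso.hom_inv_id _))

lemma homIsoExtZero_hom_naturality {Y Z : C} (f : Y ⟶ Z) :
    (homIsoExtZero R Y).hom ≫ (Ext R C 0).flip.map f =
      (linearYoneda R C).map f ≫ (homIsoExtZero R Z).hom := by
  ext1
  ext1 X
  exact congr_arg (fun α => (α.app X.unop).unop) (leftDerived_zero_comp_fromLeftDerivedZero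
    (NatTrans.rightOp ((linearYoneda R C).map f)))

end ExtZero

section ExactColim

variable {J D : Type*} [Category* J] [Category* D] [Abelian D]

lemma exact_of_exact_evaluation {S : ShortComplex (J ⥤ D)}
    (hS : ∀ j, (S.map ((evaluation J D).obj j)).Exact) : S.Exact := by
  rw [ShortComplex.exact_iff_isZero_homology]
  refine Functor.isZero _ fun j => IsZero.of_iso ?_
    (S.mapHomologyIso ((evaluation J D).obj j)).symm
  exact (ShortComplex.exact_iff_isZero_homology _).1 (hS j)

variable [HasColimitsOfShape J D] [HasExactColimitsOfShape J D] {F G H : J ⥤ D}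

lemma exact_mk₂_colim_map {f : F ⟶ G} {g : G ⟶ H}
    (h : ∀ j, (ComposableArrows.mk₂ (f.app j) (g.app j)).Exact) :
    (ComposableArrows.mk₂ (colim.map f) (colim.map g)).Exact :=
  have zero : f ≫ g = 0 := NatTrans.ext (funext fun j => (h j).zero 0)
  have hS : (ShortComplex.mk f g zero).Exact := exact_of_exact_evaluation fun j => (h j).exact 0
  (hS.map colim).exact_toComposableArrows

end ExactColim

section PowTorsion

variable {R : Type*} [CommRing R] {I : Ideal R} {M N : Type*} [AddCommGroup M] [Module R M]
  [AddCommGroup N] [Module R N]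

variable (I M) in
/-- The `I`-power torsion submodule `Γ_I(M)`: the elements of `M` annihilated by a power of `I`. -/
def powTorsion : Submodule R M where
  carrier := {m | ∃ k : ℕ, ∀ a ∈ I ^ k, a • m = 0}
  zero_mem' := ⟨0, fun a _ => smul_zero a⟩
  add_mem' := by
    rintro x y ⟨k, hk⟩ ⟨l, hl⟩
    refine ⟨k + l, fun a ha => ?_⟩
    rw [smul_add, hk a (Ideal.pow_le_pow_right (Nat.le_add_right k l) ha),
      hl a (Ideal.pow_le_pow_right (Nat.le_add_left l k) ha), add_zero]
  smul_mem' := by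
    rintro c x ⟨k, hk⟩
    exact ⟨k, fun a ha => by rw [smul_comm, hk a ha, smul_zero]⟩

lemma map_mem_powTorsion (f : M →ₗ[R] N) {m : M} (hm : m ∈ powTorsion I M) :
    f m ∈ powTorsion I N := by
  obtain ⟨k, hk⟩ := hm
  exact ⟨k, fun a ha => by rw [← map_smul, hk a ha, map_zero]⟩

variable (I) in
/-- The map `Γ_I(M) → Γ_I(N)` induced by a linear map `M → N`. -/
def powTorsionMap (f : M →ₗ[R] N) : powTorsion I M →ₗ[R] powTorsion I N :=
  f.restrict fun _ => map_mem_powTorsion f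

lemma mem_powTorsion_of_map_mem {f : M →ₗ[R] N} (hf : Function.Injective f) {m : M}
    (hm : f m ∈ powTorsion I N) : m ∈ powTorsion I M := by
  obtain ⟨k, hk⟩ := hm
  exact ⟨k, fun a ha => hf (by rw [map_smul, hk a ha, map_zero])⟩

variable (I M) in
lemma powTorsion_powTorsion : powTorsion I (powTorsion I M) = ⊤ :=
  eq_top_iff.2 fun m _ => mem_powTorsion_of_map_mem (powTorsion I M).injective_subtype m.2

lemma powTorsion_anti {J : Ideal R} (h : I ≤ J) : powTorsion J M ≤ powTorsion I M :=
  fun _ ⟨k, hk⟩ => ⟨k, fun a ha => hk a (Ideal.pow_right_mono h k ha)⟩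

lemma powTorsion_eq_top_of_surjective {f : M →ₗ[R] N} (hf : Function.Surjective f)
    (h : powTorsion I M = ⊤) : powTorsion I N = ⊤ := by
  refine eq_top_iff.2 fun n _ => ?_
  obtain ⟨m, rfl⟩ := hf n
  exact map_mem_powTorsion f (h ▸ trivial)

lemma exists_pow_smul_eq_zero_of_finite [Module.Finite R M] (h : powTorsion I M = ⊤) :
    ∃ k : ℕ, ∀ a ∈ I ^ k, ∀ m : M, a • m = 0 := by
  obtain ⟨S, hS⟩ := Module.Finite.fg_top (R := R) (M := M)
  have htop (m : M) : m ∈ powTorsion I M := h ▸ trivial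
  choose k hk using htop
  refine ⟨S.sup k, fun a ha => ?_⟩
  have hle : Submodule.span R (S : Set M) ≤ LinearMap.ker (LinearMap.lsmul R M a) :=
    Submodule.span_le.2 fun m hm => hk m a (Ideal.pow_le_pow_right (Finset.le_sup hm) ha)
  exact fun m => hle (hS ▸ trivial)

variable [IsNoetherianRing R]

lemma mem_powTorsion_iff_le_radical {m : M} :
    m ∈ powTorsion I M ↔ I ≤ (Submodule.span R {m}).annihilator.radical := by
  constructor
  · rintro ⟨k, hk⟩ x hx
    exact ⟨k, (Submodule.mem_annihilator_span_singleton m _).2 (hk _ (Ideal.pow_mem_pow hx k))⟩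
  · intro hle
    obtain ⟨k, hk⟩ := Ideal.exists_pow_le_of_le_radical_of_fg hle (IsNoetherian.noetherian I)
    exact ⟨k, fun a ha => (Submodule.mem_annihilator_span_singleton m _).1 (hk ha)⟩

lemma powTorsion_eq_top_iff_support_subset :
    powTorsion I M = ⊤ ↔ Module.support R M ⊆ PrimeSpectrum.zeroLocus I := by
  rw [eq_top_iff]
  constructor
  · intro h p hp
    obtain ⟨m, hm⟩ := Module.mem_support_iff_exists_annihilator.1 hp
    exact (mem_powTorsion_iff_le_radical.1 (h (Submodule.mem_top (x := m)))).trans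
      (p.2.radical_le_iff.2 hm)
  · intro h m _
    rw [mem_powTorsion_iff_le_radical, Ideal.radical_eq_sInf]
    exact le_sInf fun p ⟨hp, hprime⟩ =>
      h (a := ⟨p, hprime⟩) (Module.mem_support_iff_exists_annihilator.2 ⟨m, hp⟩)

lemma mem_powTorsion_sup {J : Ideal R} {m : M} (hI : m ∈ powTorsion I M)
    (hJ : m ∈ powTorsion J M) : m ∈ powTorsion (I ⊔ J) M := by
  rw [mem_powTorsion_iff_le_radical] at *
  exact sup_le hI hJ

end PowTorsion

section Injective

variable {R : Type u} [CommRing R] [IsNoetherianRing R] (I : Ideal R)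

/- By the Artin–Rees lemma, a map from `J` to a module killed by a power of `I` extends over the
quotient of `R` by a higher power of `I`. -/
lemma exists_pow_le_ker_of_powTorsion_eq_top (J : Ideal R) {T : Type*} [AddCommGroup T] [Module R T]
    (hT : powTorsion I T = ⊤) (f : J →ₗ[R] T) : ∃ k : ℕ, ∀ x : J, (x : R) ∈ I ^ k → f x = 0 := by
  have hrange : powTorsion I (LinearMap.range f) = ⊤ :=
    eq_top_iff.2 fun y _ => mem_powTorsion_of_map_mem (Submodule.injective_subtype _) (hT ▸ trivial)
  obtain ⟨k, hk⟩ := exists_pow_smul_eq_zero_of_finite hrange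
  obtain ⟨c, hc⟩ := I.exists_pow_inf_eq_pow_smul (M := R) J
  refine ⟨k + c, fun x hx => ?_⟩
  have hx' : (x : R) ∈ I ^ k • Submodule.map J.subtype ⊤ := by
    have h : (x : R) ∈ I ^ (k + c) • (⊤ : Submodule R R) ⊓ J := ⟨by simpa using hx, x.2⟩
    rw [hc _ (Nat.le_add_left c k), Nat.add_sub_cancel] at h
    rw [Submodule.map_top, Submodule.range_subtype]
    exact Submodule.smul_mono le_rfl inf_le_right h
  rw [← Submodule.map_smul''] at hx'
  obtain ⟨y, hy, hyx⟩ := hx'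
  obtain rfl : y = x := Subtype.ext hyx
  have hker : I ^ k • (⊤ : Submodule R J) ≤ LinearMap.ker f :=
    Submodule.smul_le.2 fun r hr z _ => (f.map_smul r z).trans
      (congr_arg Subtype.val (hk r hr ⟨f z, z, rfl⟩))
  exact hker hy

lemma injective_powTorsion {E : Type u} [AddCommGroup E] [Module R E]
    (hE : Module.Injective R E) : Module.Injective R (powTorsion I E) := by
  refine Module.Baer.injective fun J f => ?_
  obtain ⟨k, hk⟩ := exists_pow_le_ker_of_powTorsion_eq_top I J (powTorsion_powTorsion I E) f
  let q : J →ₗ[R] R ⧸ I ^ k := (I ^ k).mkQ ∘ₗ J.subtype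
  have hq : LinearMap.ker q ≤ LinearMap.ker ((powTorsion I E).subtype ∘ₗ f) := fun x hx =>
    congr_arg Subtype.val (hk x ((Submodule.Quotient.mk_eq_zero _).1 hx))
  obtain ⟨h, hh⟩ := hE.out ((LinearMap.ker q).liftQ q le_rfl)
    (LinearMap.ker_eq_bot.1 (Submodule.ker_liftQ_eq_bot _ _ _ le_rfl))
    ((LinearMap.ker q).liftQ _ hq)
  refine ⟨LinearMap.codRestrict _ (h ∘ₗ (I ^ k).mkQ) fun r => ⟨k, fun a ha => ?_⟩,
    fun x hx => Subtype.ext (hh (Submodule.Quotient.mk ⟨x, hx⟩))⟩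
  rw [LinearMap.comp_apply, ← map_smul, ← map_smul, Submodule.mkQ_apply, smul_eq_mul,
    (Submodule.Quotient.mk_eq_zero _).2 ((I ^ k).mul_mem_right r ha), map_zero]

end Injective

section LocalCohomology

variable {R : Type u} [CommRing R]

/-- The direct system of the quotients `R ⧸ I ^ k`, with values in the opposite category so that
contravariant functors turn it into the directed systems defining local cohomology. -/
abbrev quotientPowers (I : Ideal R) : ℕᵒᵖᵒᵖ ⥤ (ModuleCat.{u} R)ᵒᵖ :=
  (localCohomology.ringModIdeals (localCohomology.idealPowersDiagram I)).op

/-- Local cohomology computed as a colimit in the category of modules, rather than as a colimit in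
the category of functors. -/
def localCohomologyIsoColim (I : Ideal R) (n : ℕ) : localCohomology I n ≅
    (Ext R (ModuleCat.{u} R) n).flip ⋙
      (Functor.whiskeringLeft _ _ _).obj (quotientPowers I) ⋙ colim :=
  colimitIsoFlipCompColim _

/-- The local cohomology module `H^n_I(M)` of an unbundled module `M`. -/
abbrev LocalCohomology (I : Ideal R) (n : ℕ) (M : Type u) [AddCommGroup M] [Module R M] :
    Type u :=
  (localCohomology I n).obj (ModuleCat.of R M)

instance : HasExactColimitsOfShape ℕᵒᵖᵒᵖ (ModuleCat.{u} R) :=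
  have : AB5OfSize.{0, 0} (ModuleCat.{u} R) := AB5OfSize_shrink _
  inferInstance

lemma function_exact_of_exact_mk₂ {A B C : ModuleCat.{u} R} {f : A ⟶ B} {g : B ⟶ C}
    (h : (ComposableArrows.mk₂ f g).Exact) : Function.Exact f g :=
  (ShortComplex.ShortExact.moduleCat_exact_iff_function_exact _).1 (h.exact 0)

namespace LocalCohomology

variable (I : Ideal R) (n : ℕ)

section Maps

variable {M N P : Type u} [AddCommGroup M] [Module R M] [AddCommGroup N] [Module R N]
  [AddCommGroup P] [Module R P]

/-- The linear map on local cohomology induced by a linear map. -/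
def map (f : M →ₗ[R] N) : LocalCohomology I n M →ₗ[R] LocalCohomology I n N :=
  ((localCohomology I n).map (ModuleCat.ofHom f)).hom

lemma map_comp (g : N →ₗ[R] P) (f : M →ₗ[R] N) : map I n (g ∘ₗ f) = map I n g ∘ₗ map I n f :=
  congr_arg ModuleCat.Hom.hom ((localCohomology I n).map_comp (ModuleCat.ofHom f)
    (ModuleCat.ofHom g))

lemma map_smul_id (r : R) :
    map I n (r • (LinearMap.id : M →ₗ[R] M)) = r • LinearMap.id := by
  have h : colim.map (Functor.whiskerLeft (quotientPowers I)
      ((Ext R (ModuleCat.{u} R) n).flip.map (r • 𝟙 (ModuleCat.of R M)))) = r • 𝟙 _ := by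
    refine colimit.hom_ext fun j => (ι_colimMap _ j).trans ?_
    refine (congr_arg (· ≫ _) (ext_map_smul_id r n ((quotientPowers I).obj j) _)).trans ?_
    rw [Linear.smul_comp, Linear.comp_smul]
    exact congr_arg _ ((Category.id_comp _).trans (Category.comp_id _).symm)
  have key : (localCohomology I n).map (r • 𝟙 (ModuleCat.of R M)) = r • 𝟙 _ := by
    rw [← Iso.cancel_iso_hom_right _ _ ((localCohomologyIsoColim I n).app _), Iso.app_hom,
      NatTrans.naturality, Linear.smul_comp, Category.id_comp]
    exact (congr_arg _ h).trans
      ((Linear.comp_smul _ _ _ _ _ _).trans (congr_arg (r • ·) (Category.comp_id _)))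
  exact congr_arg ModuleCat.Hom.hom key

end Maps

section LongExactSequence

variable {M N P : Type u} [AddCommGroup M] [Module R M] [AddCommGroup N] [Module R N]
  [AddCommGroup P] [Module R P] {f : M →ₗ[R] N} {g : N →ₗ[R] P}

lemma shortExact_moduleCatMk (hf : Function.Injective f) (hfg : Function.Exact f g)
    (hg : Function.Surjective g) :
    (ShortComplex.moduleCatMk f g hfg.linearMap_comp_eq_zero).ShortExact :=
  ModuleCat.shortComplex_shortExact _ hfg hf hg

/-- The connecting homomorphism of local cohomology. -/
def δ (hf : Function.Injective f) (hfg : Function.Exact f g) (hg : Function.Surjective g) :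
    LocalCohomology I n P →ₗ[R] LocalCohomology I (n + 1) M :=
  (((localCohomologyIsoColim I n).hom.app (ModuleCat.of R P) ≫
    colim.map (Functor.whiskerLeft (quotientPowers I)
      (extδ R (shortExact_moduleCatMk hf hfg hg) n))) ≫
      (localCohomologyIsoColim I (n + 1)).inv.app (ModuleCat.of R M)).hom

lemma exact_map_map (hf : Function.Injective f) (hfg : Function.Exact f g)
    (hg : Function.Surjective g) : Function.Exact (map I n f) (map I n g) :=
  function_exact_of_exact_mk₂ <| exact_mk₂_of_iso
    (exact_mk₂_colim_map
      (f := Functor.whiskerLeft (quotientPowers I) ((Ext R _ n).flip.map (ModuleCat.ofHom f)))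
      (g := Functor.whiskerLeft (quotientPowers I) ((Ext R _ n).flip.map (ModuleCat.ofHom g)))
      fun _ => ext_exact_map_map R (shortExact_moduleCatMk hf hfg hg) n _)
    ((localCohomologyIsoColim I n).app _) ((localCohomologyIsoColim I n).app _)
    ((localCohomologyIsoColim I n).app _)
    ((localCohomologyIsoColim I n).hom.naturality _)
    ((localCohomologyIsoColim I n).hom.naturality _)

variable (hf : Function.Injective f) (hfg : Function.Exact f g) (hg : Function.Surjective g)

lemma ofHom_δ_comp :
    ModuleCat.ofHom (δ I n hf hfg hg) ≫
        (localCohomologyIsoColim I (n + 1)).hom.app (ModuleCat.of R M) =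
      (localCohomologyIsoColim I n).hom.app (ModuleCat.of R P) ≫
        colim.map (Functor.whiskerLeft (quotientPowers I)
          (extδ R (shortExact_moduleCatMk hf hfg hg) n)) :=
  (Iso.eq_comp_inv ((localCohomologyIsoColim I (n + 1)).app (ModuleCat.of R M))).1 rfl

lemma exact_map_δ : Function.Exact (map I n g) (δ I n hf hfg hg) :=
  function_exact_of_exact_mk₂ <| exact_mk₂_of_iso
    (exact_mk₂_colim_map
      (f := Functor.whiskerLeft (quotientPowers I) ((Ext R _ n).flip.map (ModuleCat.ofHom g)))
      (g := Functor.whiskerLeft (quotientPowers I)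
        (extδ R (shortExact_moduleCatMk hf hfg hg) n))
      fun _ => ext_exact_map_δ R (shortExact_moduleCatMk hf hfg hg) n _)
    ((localCohomologyIsoColim I n).app _) ((localCohomologyIsoColim I n).app _)
    ((localCohomologyIsoColim I (n + 1)).app _)
    ((localCohomologyIsoColim I n).hom.naturality _)
    (ofHom_δ_comp I n hf hfg hg)

lemma exact_δ_map : Function.Exact (δ I n hf hfg hg) (map I (n + 1) f) :=
  function_exact_of_exact_mk₂ <| exact_mk₂_of_iso
    (exact_mk₂_colim_map
      (f := Functor.whiskerLeft (quotientPowers I)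
        (extδ R (shortExact_moduleCatMk hf hfg hg) n))
      (g := Functor.whiskerLeft (quotientPowers I)
        ((Ext R _ (n + 1)).flip.map (ModuleCat.ofHom f)))
      fun _ => ext_exact_δ_map R (shortExact_moduleCatMk hf hfg hg) n _)
    ((localCohomologyIsoColim I n).app _) ((localCohomologyIsoColim I (n + 1)).app _)
    ((localCohomologyIsoColim I (n + 1)).app _)
    (ofHom_δ_comp I n hf hfg hg)
    ((localCohomologyIsoColim I (n + 1)).hom.naturality _)

end LongExactSequence

lemma subsingleton_succ_of_injective (E : Type u) [AddCommGroup E] [Module R E]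
    (hE : Module.Injective R E) : Subsingleton (LocalCohomology I (n + 1) E) := by
  have := Module.injective_object_of_injective_module R E
  have h : IsZero (quotientPowers I ⋙
      (Ext R (ModuleCat.{u} R) (n + 1)).flip.obj (ModuleCat.of R E)) :=
    Functor.isZero _ fun j =>
      isZero_ext_succ_of_injective R n ((quotientPowers I).obj j) (ModuleCat.of R E)
  exact ModuleCat.subsingleton_of_isZero
    ((colim.map_isZero h).of_iso ((localCohomologyIsoColim I (n + 1)).app (ModuleCat.of R E)))

section Zero

variable (M : Type u) [AddCommGroup M] [Module R M] {N : Type u} [AddCommGroup N] [Module R N]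

/-- Evaluation at `1` of homomorphisms `R ⧸ I ^ k ⟶ M`. -/
def evalOne (j : ℕᵒᵖᵒᵖ) :
    ((linearYoneda R (ModuleCat.{u} R)).obj (ModuleCat.of R M)).obj ((quotientPowers I).obj j) ⟶
      ModuleCat.of R M :=
  ModuleCat.ofHom
    { toFun := fun (φ : ModuleCat.of R (R ⧸ I ^ j.unop.unop) ⟶ ModuleCat.of R M) =>
        φ.hom (Submodule.Quotient.mk 1)
      map_add' := fun _ _ => rfl
      map_smul' := fun _ _ => rfl }

/-- The class in `H^0_I(M)` of a homomorphism `R ⧸ I ^ k ⟶ M`. -/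
def zeroOfHom (j : ℕᵒᵖᵒᵖ) :
    ((linearYoneda R (ModuleCat.{u} R)).obj (ModuleCat.of R M)).obj ((quotientPowers I).obj j) ⟶
      (localCohomology I 0).obj (ModuleCat.of R M) :=
  (homIsoExtZero R (ModuleCat.of R M)).hom.app _ ≫
    colimit.ι (quotientPowers I ⋙ (Ext R (ModuleCat.{u} R) 0).flip.obj (ModuleCat.of R M)) j ≫
      (localCohomologyIsoColim I 0).inv.app (ModuleCat.of R M)

/-- The evaluations at `1` as a cocone under the direct system `Ext^0(R ⧸ I ^ k, M)`. -/
def evalOneCocone :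
    Cocone (quotientPowers I ⋙ (Ext R (ModuleCat.{u} R) 0).flip.obj (ModuleCat.of R M)) where
  pt := ModuleCat.of R M
  ι :=
    { app := fun j => (homIsoExtZero R (ModuleCat.of R M)).inv.app _ ≫ evalOne I M j
      naturality := fun _ _ φ =>
        ((homIsoExtZero R (ModuleCat.of R M)).inv.naturality_assoc
          ((quotientPowers I).map φ) _).trans (Category.comp_id _).symm }

/-- The natural map `H^0_I(M) → M`, induced by evaluating homomorphisms `R ⧸ I ^ k ⟶ M` at `1`. -/
def zeroToModule : LocalCohomology I 0 M →ₗ[R] M :=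
  ((localCohomologyIsoColim I 0).hom.app (ModuleCat.of R M) ≫
    colimit.desc _ (evalOneCocone I M)).hom

lemma exists_zeroOfHom_eq (z : LocalCohomology I 0 M) :
    ∃ (j : ℕᵒᵖᵒᵖ) (φ : ((quotientPowers I).obj j).unop ⟶ ModuleCat.of R M),
      (zeroOfHom I M j).hom φ = z := by
  have : PreservesFilteredColimitsOfSize.{0, 0} (forget (ModuleCat.{u} R)) :=
    preservesFilteredColimitsOfSize_shrink.{0, u, 0, u} _
  let e := ((localCohomologyIsoColim I 0).app (ModuleCat.of R M)).toLinearEquiv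
  obtain ⟨j, y, hy⟩ := Concrete.colimit_exists_rep
    (quotientPowers I ⋙ (Ext R (ModuleCat.{u} R) 0).flip.obj (ModuleCat.of R M)) (e z)
  let e' := ((homIsoExtZero R (ModuleCat.of R M)).app ((quotientPowers I).obj j)).toLinearEquiv
  refine ⟨j, e'.symm y, ?_⟩
  have h : e.symm (colimit.ι (quotientPowers I ⋙
      (Ext R (ModuleCat.{u} R) 0).flip.obj (ModuleCat.of R M)) j (e' (e'.symm y))) = z := by
    rw [e'.apply_symm_apply, hy, e.symm_apply_apply]
  exact h

lemma zeroToModule_zeroOfHom (j : ℕᵒᵖᵒᵖ)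
    (φ : ((quotientPowers I).obj j).unop ⟶ ModuleCat.of R M) :
    zeroToModule I M ((zeroOfHom I M j).hom φ) = (evalOne I M j).hom φ := by
  let e := ((localCohomologyIsoColim I 0).app (ModuleCat.of R M)).toLinearEquiv
  let e' := ((homIsoExtZero R (ModuleCat.of R M)).app ((quotientPowers I).obj j)).toLinearEquiv
  refine (congr_arg (colimit.desc _ (evalOneCocone I M)).hom (e.apply_symm_apply _)).trans ?_
  refine (congr_arg (fun ψ => ψ.hom (e' φ)) (colimit.ι_desc (evalOneCocone I M) j)).trans ?_
  exact congr_arg (evalOne I M j).hom (e'.symm_apply_apply φ)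

variable {M}

lemma map_zeroOfHom (f : M →ₗ[R] N) (j : ℕᵒᵖᵒᵖ)
    (φ : ((quotientPowers I).obj j).unop ⟶ ModuleCat.of R M) :
    map I 0 f ((zeroOfHom I M j).hom φ) = (zeroOfHom I N j).hom (φ ≫ ModuleCat.ofHom f) := by
  have key : zeroOfHom I M j ≫ (localCohomology I 0).map (ModuleCat.ofHom f) =
      ((linearYoneda R (ModuleCat.{u} R)).map (ModuleCat.ofHom f)).app _ ≫ zeroOfHom I N j := by
    rw [zeroOfHom, zeroOfHom, Category.assoc, Category.assoc,
      ← (localCohomologyIsoColim I 0).inv.naturality]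
    have h := NatTrans.congr_app (homIsoExtZero_hom_naturality R (ModuleCat.ofHom f))
      ((quotientPowers I).obj j)
    rw [NatTrans.comp_app, NatTrans.comp_app] at h
    have h' := ι_colimMap (Functor.whiskerLeft (quotientPowers I)
      ((Ext R (ModuleCat.{u} R) 0).flip.map (ModuleCat.ofHom f))) j
    refine (congr_arg (_ ≫ ·) ((reassoc_of% h') _)).trans ?_
    exact (reassoc_of% h) _
  exact congr_arg (fun ψ => ModuleCat.Hom.hom ψ φ) key

lemma zeroToModule_map (f : M →ₗ[R] N) (z : LocalCohomology I 0 M) :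
    zeroToModule I N (map I 0 f z) = f (zeroToModule I M z) := by
  obtain ⟨j, φ, rfl⟩ := exists_zeroOfHom_eq I M z
  rw [map_zeroOfHom, zeroToModule_zeroOfHom, zeroToModule_zeroOfHom]
  rfl

lemma evalOne_injective (j : ℕᵒᵖᵒᵖ) : Function.Injective (evalOne I M j) := by
  intro (φ : ModuleCat.of R (R ⧸ I ^ j.unop.unop) ⟶ ModuleCat.of R M) ψ h
  exact ModuleCat.hom_ext (Submodule.linearMap_qext _ (LinearMap.ext_ring h))

lemma exists_evalOne_eq_iff {m : M} :
    (∃ j, ∃ φ : ((quotientPowers I).obj j).unop ⟶ ModuleCat.of R M,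
      (evalOne I M j).hom φ = m) ↔ m ∈ powTorsion I M := by
  constructor
  · rintro ⟨j, φ, rfl⟩
    refine ⟨j.unop.unop, fun a ha => (φ.hom.map_smul a _).symm.trans ?_⟩
    refine (congr_arg φ.hom ?_).trans φ.hom.map_zero
    exact (Submodule.Quotient.mk_eq_zero (I ^ j.unop.unop)).2 (by simpa using ha)
  · rintro ⟨k, hk⟩
    exact ⟨op (op k), ModuleCat.ofHom (Submodule.liftQ (I ^ k) (LinearMap.toSpanSingleton R M m)
      hk), one_smul R m⟩

lemma zeroToModule_injective : Function.Injective (zeroToModule I M) := by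
  refine (injective_iff_map_eq_zero _).2 fun z hz => ?_
  obtain ⟨j, φ, rfl⟩ := exists_zeroOfHom_eq I M z
  rw [zeroToModule_zeroOfHom] at hz
  rw [evalOne_injective I j (hz.trans (map_zero (evalOne I M j).hom).symm)]
  exact map_zero (zeroOfHom I M j).hom

lemma range_zeroToModule : LinearMap.range (zeroToModule I M) = powTorsion I M := by
  ext m
  rw [← exists_evalOne_eq_iff]
  constructor
  · rintro ⟨z, rfl⟩
    obtain ⟨j, φ, rfl⟩ := exists_zeroOfHom_eq I M z
    exact ⟨j, φ, (zeroToModule_zeroOfHom I M j φ).symm⟩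
  · rintro ⟨j, φ, rfl⟩
    exact ⟨(zeroOfHom I M j).hom φ, zeroToModule_zeroOfHom I M j φ⟩

variable (M) in
/-- The identification of `H^0_I(M)` with the `I`-power torsion of `M`. -/
def zeroEquiv : LocalCohomology I 0 M ≃ₗ[R] powTorsion I M :=
  LinearEquiv.ofInjective _ (zeroToModule_injective I) ≪≫ₗ
    LinearEquiv.ofEq _ _ (range_zeroToModule I)

lemma zeroEquiv_map (f : M →ₗ[R] N) (z : LocalCohomology I 0 M) :
    zeroEquiv I N (map I 0 f z) = powTorsionMap I f (zeroEquiv I M z) :=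
  Subtype.ext (zeroToModule_map I f z)

end Zero

end LocalCohomology

end LocalCohomology

namespace LocalCohomology

variable {R : Type u} [CommRing R] (I : Ideal R) (n : ℕ) {M N P : Type u}
  [AddCommGroup M] [Module R M] [AddCommGroup N] [Module R N] [AddCommGroup P] [Module R P]

variable (R M) in
lemma exists_injective_embedding :
    ∃ (E : ModuleCat.{u} R) (f : M →ₗ[R] E), Module.Injective R E ∧ Function.Injective f := by
  obtain ⟨⟨E, hE, f, hf⟩⟩ :=
    EnoughInjectives.presentation (C := ModuleCat.{u} R) (ModuleCat.of R M)
  have : Injective (ModuleCat.of R E) := hE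
  exact ⟨E, f.hom, Module.injective_module_of_injective_object R E,
    (ModuleCat.mono_iff_injective f).1 hf⟩

section Injective

variable {f : M →ₗ[R] N} {g : N →ₗ[R] P} (hf : Function.Injective f) (hfg : Function.Exact f g)
  (hg : Function.Surjective g) (hN : Module.Injective R N)

include hN

lemma δ_surjective_of_injective : Function.Surjective (δ I n hf hfg hg) := by
  have := subsingleton_succ_of_injective I n N hN
  exact fun z => (exact_δ_map I n hf hfg hg z).1 (Subsingleton.elim _ _)

lemma δ_injective_of_injective : Function.Injective (δ I (n + 1) hf hfg hg) := by
  have := subsingleton_succ_of_injective I n N hN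
  refine (injective_iff_map_eq_zero _).2 fun z hz => ?_
  obtain ⟨y, rfl⟩ := (exact_map_δ I (n + 1) hf hfg hg z).1 hz
  rw [Subsingleton.elim y 0, map_zero]

end Injective

variable (M) in
/-- `IsTorsionPresentation n M g`, for a linear map `g : N → P`, says that for every ideal `I` the
module `H^n_I(M)` is isomorphic to the cokernel of the map `Γ_I(N) → Γ_I(P)` induced by `g`. -/
def IsTorsionPresentation (g : N →ₗ[R] P) : Prop :=
  ∀ I : Ideal R, ∃ φ : powTorsion I P →ₗ[R] LocalCohomology I n M,
    Function.Surjective φ ∧ Function.Exact (powTorsionMap I g) φ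

variable (R M) in
lemma isTorsionPresentation_zero :
    IsTorsionPresentation 0 M (0 : PUnit.{u + 1} →ₗ[R] M) := fun I => by
  refine ⟨(zeroEquiv I M).symm, (zeroEquiv I M).symm.surjective, fun z => ?_⟩
  refine (zeroEquiv I M).symm.map_eq_zero_iff.trans ⟨fun hz => ⟨0, hz ▸ map_zero _⟩, ?_⟩
  rintro ⟨y, rfl⟩
  exact Subtype.ext rfl

section

variable {f : M →ₗ[R] N} {g : N →ₗ[R] P} (hf : Function.Injective f) (hfg : Function.Exact f g)
  (hg : Function.Surjective g) (hN : Module.Injective R N)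

include hf hfg hg hN

lemma isTorsionPresentation_one_of_injective : IsTorsionPresentation 1 M g := fun I => by
  refine ⟨δ I 0 hf hfg hg ∘ₗ (zeroEquiv I P).symm,
    (δ_surjective_of_injective I 0 hf hfg hg hN).comp (zeroEquiv I P).symm.surjective, ?_⟩
  refine (Function.Exact.iff_of_ladder_linearEquiv (e₁ := zeroEquiv I N) (e₂ := zeroEquiv I P)
    (e₃ := LinearEquiv.refl R _) ?_ ?_).2 (exact_map_δ I 0 hf hfg hg)
  · exact LinearMap.ext fun z => (zeroEquiv_map I g z).symm
  · exact LinearMap.ext fun z => congr_arg (δ I 0 hf hfg hg) ((zeroEquiv I P).symm_apply_apply z)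

lemma IsTorsionPresentation.succ_of_injective {E Q : Type u} [AddCommGroup E] [Module R E]
    [AddCommGroup Q] [Module R Q] {h : E →ₗ[R] Q} {n : ℕ}
    (hh : IsTorsionPresentation (n + 1) P h) : IsTorsionPresentation (n + 2) M h := fun I => by
  obtain ⟨φ, hφ, hφ'⟩ := hh I
  refine ⟨δ I (n + 1) hf hfg hg ∘ₗ φ,
    (δ_surjective_of_injective I (n + 1) hf hfg hg hN).comp hφ, fun z => ?_⟩
  rw [← hφ' z, LinearMap.comp_apply,
    map_eq_zero_iff _ (δ_injective_of_injective I n hf hfg hg hN)]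

end

variable (R M) in
lemma exists_isTorsionPresentation : ∃ (E N : ModuleCat.{u} R) (g : E →ₗ[R] N),
    Module.Injective R E ∧ IsTorsionPresentation n M g := by
  induction n generalizing M with
  | zero => exact ⟨ModuleCat.of R PUnit, ModuleCat.of R M, 0,
      ⟨fun _ _ _ _ _ _ _ _ _ => ⟨0, fun _ => Subsingleton.elim _ _⟩⟩,
      isTorsionPresentation_zero R M⟩
  | succ n ih =>
    obtain ⟨E, f, hE, hf⟩ := exists_injective_embedding R M
    have hfg : Function.Exact f (LinearMap.range f).mkQ := LinearMap.exact_map_mkQ_range f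
    have hg := (LinearMap.range f).mkQ_surjective
    cases n with
    | zero => exact ⟨E, ModuleCat.of R (E ⧸ LinearMap.range f), (LinearMap.range f).mkQ, hE,
        isTorsionPresentation_one_of_injective hf hfg hg hE⟩
    | succ n =>
      obtain ⟨E', N, g, hE', h⟩ := ih (E ⧸ LinearMap.range f)
      exact ⟨E', N, g, hE', h.succ_of_injective hf hfg hg hE⟩

variable (M) in
lemma powTorsion_eq_top : powTorsion I (LocalCohomology I n M) = ⊤ := by
  obtain ⟨E, N, g, -, h⟩ := exists_isTorsionPresentation R n M
  obtain ⟨φ, hφ, -⟩ := h I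
  exact powTorsion_eq_top_of_surjective hφ (powTorsion_powTorsion I N)

variable {I n} in
lemma exists_pow_smul_eq_zero {x : R} (hx : x ∈ I) (z : LocalCohomology I n M) :
    ∃ k : ℕ, x ^ k • z = 0 := by
  have hz : z ∈ powTorsion I (LocalCohomology I n M) := powTorsion_eq_top I n M ▸ trivial
  exact hz.imp fun k hk => hk _ (Ideal.pow_mem_pow hx k)

variable (M) in
lemma subsingleton_top : Subsingleton (LocalCohomology (⊤ : Ideal R) n M) := by
  refine subsingleton_of_forall_eq 0 fun z => ?_
  obtain ⟨k, hk⟩ := exists_pow_smul_eq_zero (x := 1) (Submodule.mem_top (R := R)) z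
  simpa using hk

lemma subsingleton_of_isUnit {x : R} (hx : x ∈ I)
    (h : IsUnit (algebraMap R (Module.End R M) x)) : Subsingleton (LocalCohomology I n M) := by
  obtain ⟨g, hg⟩ := h.exists_left_inv
  have hreg : IsSMulRegular (LocalCohomology I n M) x := by
    refine Function.LeftInverse.injective (g := map I n g) fun z => ?_
    have hid : map I n (LinearMap.id : M →ₗ[R] M) = LinearMap.id :=
      congr_arg ModuleCat.Hom.hom ((localCohomology I n).map_id (ModuleCat.of R M))
    have hcomp : map I n g ∘ₗ (x • LinearMap.id) = LinearMap.id := by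
      rw [← map_smul_id, ← map_comp, ← hid]
      exact congr_arg (map I n) hg
    exact LinearMap.congr_fun hcomp z
  refine subsingleton_of_forall_eq 0 fun z => ?_
  obtain ⟨k, hk⟩ := exists_pow_smul_eq_zero hx z
  exact (hreg.pow k).right_eq_zero_of_smul hk

variable {I}

lemma map_zero_surjective_of_surjective {f : M →ₗ[R] N} (hf : Function.Surjective f)
    (hM : powTorsion I M = ⊤) : Function.Surjective (map I 0 f) := fun z => by
  obtain ⟨m, hm⟩ := hf (zeroEquiv I N z)
  refine ⟨(zeroEquiv I M).symm ⟨m, hM ▸ trivial⟩, (zeroEquiv I N).injective (Subtype.ext ?_)⟩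
  rw [zeroEquiv_map, LinearEquiv.apply_symm_apply, ← hm]
  rfl

variable [IsNoetherianRing R]

lemma exists_injective_embedding_of_powTorsion_eq_top (hM : powTorsion I M = ⊤) :
    ∃ (E : ModuleCat.{u} R) (f : M →ₗ[R] E),
      Module.Injective R E ∧ powTorsion I E = ⊤ ∧ Function.Injective f := by
  obtain ⟨E, f, hE, hf⟩ := exists_injective_embedding R M
  exact ⟨ModuleCat.of R (powTorsion I E),
    f.codRestrict _ fun m => map_mem_powTorsion f (hM ▸ trivial), injective_powTorsion I hE,
    powTorsion_powTorsion I E, fun a b h => hf (congr_arg Subtype.val h)⟩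

lemma subsingleton_succ_of_powTorsion_eq_top (hM : powTorsion I M = ⊤) :
    Subsingleton (LocalCohomology I (n + 1) M) := by
  induction n generalizing M with
  | zero =>
    obtain ⟨E, f, hE, hE', hf⟩ := exists_injective_embedding_of_powTorsion_eq_top hM
    have hfg : Function.Exact f (LinearMap.range f).mkQ := LinearMap.exact_map_mkQ_range f
    have hg := (LinearMap.range f).mkQ_surjective
    refine subsingleton_of_forall_eq 0 fun z => ?_
    obtain ⟨y, rfl⟩ := δ_surjective_of_injective I 0 hf hfg hg hE z
    exact (exact_map_δ I 0 hf hfg hg y).2 (map_zero_surjective_of_surjective hg hE' y)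
  | succ n ih =>
    obtain ⟨E, f, hE, hE', hf⟩ := exists_injective_embedding_of_powTorsion_eq_top hM
    have hfg : Function.Exact f (LinearMap.range f).mkQ := LinearMap.exact_map_mkQ_range f
    have hg := (LinearMap.range f).mkQ_surjective
    have := ih (powTorsion_eq_top_of_surjective hg hE')
    exact (δ_surjective_of_injective I (n + 1) hf hfg hg hE).subsingleton

end LocalCohomology

section KrullDim

variable {α : Type*} [Preorder α] {S T : Set α} {n : ℕ}

lemma succ_le_krullDim_of_forall_exists_lt (h : ∀ q ∈ S, q ∈ T ∧ ∃ q' ∈ T, q' < q)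
    (hS : n ≤ Order.krullDim S) : (n + 1 : ℕ) ≤ Order.krullDim T := by
  obtain ⟨l, rfl⟩ := Order.le_krullDim_iff.1 hS
  obtain ⟨q', hq', hlt⟩ := (h l.head l.head.2).2
  exact Order.le_krullDim_iff.2
    ⟨(l.map (Set.inclusion fun q hq => (h q hq).1) fun _ _ hlt => hlt).cons ⟨q', hq'⟩ hlt,
      RelSeries.cons_length ..⟩

lemma succ_le_krullDim_of_forall_lt (hST : S ⊆ T) {p : α} (hp : p ∈ T) (h : ∀ q ∈ S, q < p)
    (hS : n ≤ Order.krullDim S) : (n + 1 : ℕ) ≤ Order.krullDim T := by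
  obtain ⟨l, rfl⟩ := Order.le_krullDim_iff.1 hS
  exact Order.le_krullDim_iff.2
    ⟨(l.map (Set.inclusion hST) fun _ _ hlt => hlt).snoc ⟨p, hp⟩ (h _ l.last.2), rfl⟩

end KrullDim

section Support

variable {R : Type*} [CommRing R] {M N P : Type*} [AddCommGroup M] [Module R M]
  [AddCommGroup N] [Module R N] [AddCommGroup P] [Module R P]

lemma support_subset_union_of_exact {f : M →ₗ[R] N} {g : N →ₗ[R] P} (hfg : Function.Exact f g) :
    Module.support R N ⊆ Module.support R M ∪ Module.support R P := by
  have h : Function.Exact (LinearMap.ker g).subtype g.rangeRestrict := fun y => by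
    simp [Subtype.ext_iff]
  rw [Module.support_of_exact h (LinearMap.ker g).subtype_injective g.surjective_rangeRestrict]
  refine Set.union_subset_union ?_
    (Module.support_subset_of_injective _ (LinearMap.range g).subtype_injective)
  rw [hfg.linearMap_ker_eq]
  exact Module.support_subset_of_surjective _ f.surjective_rangeRestrict

lemma support_subset_of_isLocalizedModule (S : Submonoid R) (f : M →ₗ[R] N)
    [IsLocalizedModule S f] : Module.support R N ⊆ Module.support R M := by
  intro p hp
  obtain ⟨z, hz⟩ := Module.mem_support_iff'.1 hp
  obtain ⟨⟨m, s⟩, hm : s • z = f m⟩ := IsLocalizedModule.surj S f z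
  refine Module.mem_support_iff'.2 ⟨m, fun r hr hrm => hz r hr ?_⟩
  refine IsLocalizedModule.smul_injective f s ?_
  dsimp only
  rw [smul_comm, hm, ← map_smul, hrm, map_zero, smul_zero]

lemma exists_lt_mem_support_of_isSMulRegular {x : R} (hx : IsSMulRegular M x)
    {p : PrimeSpectrum R} (hp : p ∈ Module.support R M) (hxp : x ∈ p.asIdeal) :
    ∃ q ∈ Module.support R M, q < p := by
  obtain ⟨m, hm⟩ := Module.mem_support_iff_exists_annihilator.1 hp
  obtain ⟨q, hq, hqp⟩ := Ideal.exists_minimalPrimes_le hm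
  refine ⟨⟨q, hq.1.1⟩, Module.mem_support_iff_exists_annihilator.2 ⟨m, hq.1.2⟩,
    lt_of_le_of_ne hqp ?_⟩
  rintro rfl
  obtain ⟨y, hy, hxy⟩ := Ideal.exists_mul_mem_of_mem_minimalPrimes hq hxp
  rw [Submodule.mem_annihilator_span_singleton] at hy hxy
  exact hy (hx.right_eq_zero_of_smul (by rwa [mul_smul] at hxy))

lemma mem_asIdeal_of_mem_support_quotient_range (x : R) (f : M →ₗ[R] N)
    [IsLocalizedModule (Submonoid.powers x) f] {p : PrimeSpectrum R}
    (hp : p ∈ Module.support R (N ⧸ LinearMap.range f)) : x ∈ p.asIdeal := by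
  obtain ⟨z, hz⟩ := Module.mem_support_iff'.1 hp
  obtain ⟨z, rfl⟩ := (LinearMap.range f).mkQ_surjective z
  obtain ⟨⟨m, ⟨_, k, rfl⟩⟩, hm : x ^ k • z = f m⟩ :=
    IsLocalizedModule.surj (Submonoid.powers x) f z
  by_contra hx
  refine hz (x ^ k) (fun h => hx (p.2.mem_of_pow_mem k h)) ?_
  rw [← map_smul, hm]
  exact (Submodule.Quotient.mk_eq_zero _).2 ⟨m, rfl⟩

lemma exists_lt_mem_support_of_mem_support_quotient_range (x : R) (f : M →ₗ[R] N)
    [IsLocalizedModule (Submonoid.powers x) f] {p : PrimeSpectrum R}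
    (hp : p ∈ Module.support R (N ⧸ LinearMap.range f)) :
    p ∈ Module.support R M ∧ ∃ q ∈ Module.support R M, q < p := by
  have hsub := support_subset_of_isLocalizedModule (Submonoid.powers x) f
  have hpN : p ∈ Module.support R N :=
    Module.support_subset_of_surjective _ (LinearMap.range f).mkQ_surjective hp
  have hreg : IsSMulRegular N x :=
    IsLocalizedModule.smul_injective f (⟨x, Submonoid.mem_powers x⟩ : Submonoid.powers x)
  obtain ⟨q, hq, hqp⟩ := exists_lt_mem_support_of_isSMulRegular hreg hpN
    (mem_asIdeal_of_mem_support_quotient_range x f hp)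
  exact ⟨hsub hpN, q, hsub hq, hqp⟩

end Support

section PowTorsionSup

variable {R : Type*} [CommRing R] {M : Type*} [AddCommGroup M] [Module R M]

lemma mem_powTorsion_span_singleton {x : R} {m : M} :
    m ∈ powTorsion (Ideal.span {x}) M ↔ ∃ k : ℕ, x ^ k • m = 0 := by
  refine exists_congr fun k => ?_
  rw [Ideal.span_singleton_pow]
  refine ⟨fun h => h _ (Ideal.mem_span_singleton_self _), fun h a ha => ?_⟩
  obtain ⟨b, rfl⟩ := Ideal.mem_span_singleton'.1 ha
  rw [mul_smul, h, smul_zero]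

variable [IsNoetherianRing R]

lemma powTorsion_sup_span_ker_eq_top (x : R) {N : Type*} [AddCommGroup N] [Module R N]
    (f : M →ₗ[R] N) [IsLocalizedModule (Submonoid.powers x) f] {J : Ideal R}
    (hM : powTorsion J M = ⊤) : powTorsion (J ⊔ Ideal.span {x}) (LinearMap.ker f) = ⊤ := by
  refine eq_top_iff.2 fun m _ => mem_powTorsion_of_map_mem (LinearMap.ker f).injective_subtype ?_
  obtain ⟨⟨_, k, rfl⟩, hk⟩ := (IsLocalizedModule.eq_zero_iff (Submonoid.powers x) f).1 m.2
  exact mem_powTorsion_sup (hM ▸ trivial) (mem_powTorsion_span_singleton.2 ⟨k, hk⟩)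

end PowTorsionSup

section SupportDimAt

variable {R : Type*} [CommRing R] (M : Type*) [AddCommGroup M] [Module R M] {N : Type*}
  [AddCommGroup N] [Module R N] {n : ℕ} {p : PrimeSpectrum R}

/-- The dimension of the localization of `M` at `p`, encoded as the supremum of the lengths of the
chains of primes in the support of `M` that are contained in `p`. It is `⊥` if `p` is not in the
support. -/
def supportDimAt (p : PrimeSpectrum R) : WithBot ℕ∞ :=
  Order.krullDim ↥(Module.support R M ∩ Set.Iic p)

variable {M}

lemma supportDimAt_nonneg (hp : p ∈ Module.support R M) : 0 ≤ supportDimAt M p :=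
  Order.krullDim_nonneg_iff.2 ⟨⟨p, hp, Set.self_mem_Iic⟩⟩

lemma supportDimAt_mono (h : Module.support R N ⊆ Module.support R M) :
    supportDimAt N p ≤ supportDimAt M p :=
  Order.krullDim_le_of_strictMono (Set.inclusion (Set.inter_subset_inter_left _ h))
    fun _ _ hlt => hlt

lemma succ_le_supportDimAt_of_le_quotient_range (x : R) (f : M →ₗ[R] N)
    [IsLocalizedModule (Submonoid.powers x) f] (h : n ≤ supportDimAt (N ⧸ LinearMap.range f) p) :
    (n + 1 : ℕ) ≤ supportDimAt M p := by
  refine succ_le_krullDim_of_forall_exists_lt (fun q hq => ?_) h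
  obtain ⟨hqM, q', hq', hlt⟩ := exists_lt_mem_support_of_mem_support_quotient_range x f hq.1
  exact ⟨⟨hqM, hq.2⟩, q', ⟨hq', hlt.le.trans hq.2⟩, hlt⟩

lemma maximalIdeal_le_of_krullDim_support_le [IsLocalRing R]
    (hn : Order.krullDim (Module.support R M) ≤ n) (hp : n ≤ supportDimAt M p) :
    IsLocalRing.maximalIdeal R ≤ p.asIdeal := by
  by_contra hle
  have hlt : p < IsLocalRing.closedPoint R :=
    (IsLocalRing.le_maximalIdeal p.2.ne_top).lt_of_not_ge hle
  obtain ⟨⟨q, hq, -⟩⟩ := Order.krullDim_nonneg_iff.1 ((Nat.cast_nonneg n).trans hp)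
  have hsucc : (n + 1 : ℕ) ≤ Order.krullDim (Module.support R M) :=
    succ_le_krullDim_of_forall_lt Set.inter_subset_left
      (Module.mem_support_mono (IsLocalRing.le_maximalIdeal q.2.ne_top) hq)
      (fun q hq => hq.2.trans_lt hlt) hp
  exact Nat.not_succ_le_self n (Nat.cast_le.1 (hsucc.trans hn))

end SupportDimAt

namespace LocalCohomology

variable {R : Type u} [CommRing R] {I : Ideal R} {n : ℕ} {M N : Type u}
  [AddCommGroup M] [Module R M] [AddCommGroup N] [Module R N]

lemma support_succ_subset_ker_union_quotient_range {x : R} (hx : x ∈ I) (f : M →ₗ[R] N)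
    [IsLocalizedModule (Submonoid.powers x) f] :
    Module.support R (LocalCohomology I (n + 1) M) ⊆
      Module.support R (LocalCohomology I (n + 1) (LinearMap.ker f)) ∪
        Module.support R (LocalCohomology I n (N ⧸ LinearMap.range f)) := by
  have hK : Function.Exact (LinearMap.ker f).subtype f.rangeRestrict := fun y => by
    simp [Subtype.ext_iff]
  have hker := (LinearMap.ker f).subtype_injective
  have hQ : Function.Exact (LinearMap.range f).subtype (LinearMap.range f).mkQ :=
    LinearMap.exact_subtype_mkQ _
  have hrange := (LinearMap.range f).subtype_injective
  have hmkQ := (LinearMap.range f).mkQ_surjective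
  have := subsingleton_of_isUnit I (n + 1) hx
    (IsLocalizedModule.map_units f (⟨x, Submonoid.mem_powers x⟩ : Submonoid.powers x))
  have hδ : Function.Surjective (δ I n hrange hQ hmkQ) := fun z =>
    (exact_δ_map I n hrange hQ hmkQ z).1 (Subsingleton.elim _ _)
  exact (support_subset_union_of_exact
    (exact_map_map I (n + 1) hker hK f.surjective_rangeRestrict)).trans
      (Set.union_subset_union_right _ (Module.support_subset_of_surjective _ hδ))

variable [IsNoetherianRing R] {p : PrimeSpectrum R}

/- Instead of `M`, one may use the kernel of `M → M_x` for `x ∈ I`, at the cost of increasing the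
ideal `J` of elements acting locally nilpotently on `M`, and vanishing holds once `J = I`. -/
lemma succ_le_supportDimAt_of_mem_support
    (ih : ∀ (M : Type u) [AddCommGroup M] [Module R M],
      p ∈ Module.support R (LocalCohomology I n M) → n ≤ supportDimAt M p)
    (J : Ideal R) (hJ : J ≤ I) (hM : powTorsion J M = ⊤)
    (hp : p ∈ Module.support R (LocalCohomology I (n + 1) M)) :
    (n + 1 : ℕ) ≤ supportDimAt M p := by
  induction J using IsNoetherian.induction generalizing M with
  | hgt J ihJ =>
    obtain rfl | hlt := hJ.eq_or_lt
    · have := subsingleton_succ_of_powTorsion_eq_top n hM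
      simp [Module.support_eq_empty] at hp
    obtain ⟨x, hxI, hxJ⟩ := SetLike.exists_of_lt hlt
    let f := LocalizedModule.mkLinearMap (Submonoid.powers x) M
    obtain hK | hQ := support_succ_subset_ker_union_quotient_range hxI f hp
    · have hker : powTorsion (J ⊔ Ideal.span {x}) (LinearMap.ker f) = ⊤ :=
        powTorsion_sup_span_ker_eq_top x f hM
      exact (ihJ _ (left_lt_sup.2 fun h => hxJ (h (Ideal.mem_span_singleton_self x)))
        (sup_le hJ ((Ideal.span_singleton_le_iff_mem _).2 hxI)) hker hK).trans
        (supportDimAt_mono (Module.support_subset_of_injective _ (Submodule.subtype_injective _)))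
    · exact succ_le_supportDimAt_of_le_quotient_range x f (ih _ hQ)

lemma le_supportDimAt_of_mem_support (n : ℕ) (M : Type u) [AddCommGroup M] [Module R M]
    (hp : p ∈ Module.support R (LocalCohomology I n M)) : n ≤ supportDimAt M p := by
  induction n generalizing M with
  | zero =>
    rw [(zeroEquiv I M).support_eq] at hp
    exact supportDimAt_nonneg
      (Module.support_subset_of_injective _ (powTorsion I M).subtype_injective hp)
  | succ n ih =>
    exact succ_le_supportDimAt_of_mem_support ih ⊥ bot_le
      (powTorsion_eq_top_iff_support_subset.2 (by simp)) hp

end LocalCohomology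

section Divisibility

variable {R : Type u} [CommRing R] [IsNoetherianRing R] {E : Type u} [AddCommGroup E] [Module R E]

lemma exists_pow_smul_eq_of_injective (hE : Module.Injective R E) (x : R) (k : ℕ) (y : E) :
    ∃ (z : E) (j : ℕ), x ^ (j + k) • z = x ^ j • y := by
  -- Once the annihilators of the powers of `x` are stationary, `x ^ (j + k) ↦ x ^ j • y` is a
  -- well-defined map from the ideal generated by `x ^ (j + k)` to `E`, and it extends to `R`.
  let mulPow (j : ℕ) : R →ₗ[R] R := LinearMap.toSpanSingleton R R (x ^ j)
  have hmono : Monotone fun j => LinearMap.ker (mulPow j) :=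
    monotone_nat_of_le_succ fun j r (hr : r * x ^ j = 0) => by
      change r * x ^ (j + 1) = 0
      rw [pow_succ, ← mul_assoc, hr, zero_mul]
  obtain ⟨j, hj⟩ := monotone_stabilizes_iff_noetherian.2 ‹IsNoetherianRing R› ⟨_, hmono⟩
  have hle : LinearMap.ker (mulPow (j + k)) ≤
      LinearMap.ker (LinearMap.toSpanSingleton R E (x ^ j • y)) := by
    intro r hr
    have hrj : r * x ^ j = 0 := (hj (j + k) (Nat.le_add_right j k)).ge hr
    change r • x ^ j • y = 0
    rw [← mul_smul, hrj, zero_smul]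
  obtain ⟨h, hh⟩ := hE.out ((LinearMap.ker (mulPow (j + k))).liftQ _ le_rfl)
    (LinearMap.ker_eq_bot.1 (Submodule.ker_liftQ_eq_bot _ _ _ le_rfl))
    ((LinearMap.ker (mulPow (j + k))).liftQ _ hle)
  refine ⟨h 1, j, ?_⟩
  have h_one : h ((1 : R) • x ^ (j + k)) = (1 : R) • x ^ j • y := hh (Submodule.Quotient.mk 1)
  rw [← one_smul R (x ^ j • y), ← h_one, ← map_smul, one_smul, smul_eq_mul, mul_one]

variable {N : Type*} [AddCommGroup N] [Module R N] {I : Ideal R}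

/- Dividing `y` by `x ^ k` in the injective module `Γ_I(E)`, up to `x`-power torsion, gives the
correction of `w`. -/
lemma exists_sub_map_mem_powTorsion_sup (hE : Module.Injective R E) {x : R} {k : ℕ}
    (g : E →ₗ[R] N) {w : N} (hw : w ∈ powTorsion I N) {y : E} (hy : y ∈ powTorsion I E)
    (hyw : g y = x ^ k • w) :
    ∃ z ∈ powTorsion I E, w - g z ∈ powTorsion (I ⊔ Ideal.span {x}) N := by
  obtain ⟨⟨z, hz⟩, j, hj⟩ := exists_pow_smul_eq_of_injective (injective_powTorsion I hE) x k ⟨y, hy⟩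
  have hzy : x ^ (j + k) • z = x ^ j • y := congr_arg Subtype.val hj
  refine ⟨z, hz, mem_powTorsion_sup (sub_mem hw (map_mem_powTorsion g hz))
    (mem_powTorsion_span_singleton.2 ⟨j + k, ?_⟩)⟩
  rw [smul_sub, ← map_smul, hzy, map_smul, hyw, pow_add, mul_smul, sub_self]

end Divisibility

namespace LocalCohomology

variable {R : Type u} [CommRing R] [IsNoetherianRing R] {I : Ideal R} {n : ℕ} {M : Type u}
  [AddCommGroup M] [Module R M]

lemma exists_surjective_of_sup_span {x : R}
    (hx : powTorsion (Ideal.span {x}) (LocalCohomology I n M) = ⊤) :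
    ∃ ψ : LocalCohomology (I ⊔ Ideal.span {x}) n M →ₗ[R] LocalCohomology I n M,
      Function.Surjective ψ := by
  obtain ⟨E, N, g, hE, hg⟩ := exists_isTorsionPresentation R n M
  obtain ⟨φ, hφ, hφ_exact⟩ := hg I
  obtain ⟨φ', hφ', hφ'_exact⟩ := hg (I ⊔ Ideal.span {x})
  let ι := Submodule.inclusion (powTorsion_anti (le_sup_left : I ≤ I ⊔ Ideal.span {x}) (M := N))
  have hker : LinearMap.ker φ' ≤ LinearMap.ker (φ ∘ₗ ι) := fun w hw => by
    obtain ⟨y, rfl⟩ := (hφ'_exact w).1 hw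
    exact (hφ_exact _).2 ⟨⟨y, powTorsion_anti le_sup_left y.2⟩, rfl⟩
  have hsurj : Function.Surjective (φ ∘ₗ ι) := fun z => by
    obtain ⟨w, rfl⟩ := hφ z
    obtain ⟨k, hk⟩ := mem_powTorsion_span_singleton.1 (hx.ge (Submodule.mem_top (x := φ w)))
    obtain ⟨y, hyw⟩ := (hφ_exact (x ^ k • w)).1 (by rw [map_smul, hk])
    obtain ⟨v, hv, hwv⟩ :=
      exists_sub_map_mem_powTorsion_sup hE g w.2 y.2 (congr_arg Subtype.val hyw)
    refine ⟨⟨w - g v, hwv⟩, ?_⟩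
    have hφv : φ (powTorsionMap I g ⟨v, hv⟩) = 0 := (hφ_exact _).2 ⟨_, rfl⟩
    exact (map_sub φ w _).trans (by rw [hφv, sub_zero])
  let e := φ'.quotKerEquivOfSurjective hφ'
  have hlift : Function.Surjective ((LinearMap.ker φ').liftQ _ hker) :=
    LinearMap.range_eq_top.1 ((Submodule.range_liftQ _ _ _).trans (LinearMap.range_eq_top.2 hsurj))
  exact ⟨(LinearMap.ker φ').liftQ _ hker ∘ₗ e.symm, hlift.comp e.symm.surjective⟩

lemma powTorsion_eq_top_of_forall_le {J : Ideal R}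
    (hJ : ∀ p, n ≤ supportDimAt M p → J ≤ p.asIdeal) :
    powTorsion J (LocalCohomology I n M) = ⊤ :=
  powTorsion_eq_top_iff_support_subset.2 fun p hp => hJ p (le_supportDimAt_of_mem_support n M hp)

end LocalCohomology

theorem isArtinian_localCohomology_of_isArtinian_localCohomology_maximalIdeal_general
    {R : Type u} [CommRing R] [IsNoetherianRing R] (M : ModuleCat.{u} R) (n : ℕ) (J : Ideal R)
    (hJ : ∀ p, n ≤ supportDimAt M p → J ≤ p.asIdeal)
    (hart : IsArtinian R ((localCohomology J n).obj M)) (I : Ideal R) (hI : I ≤ J) :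
    IsArtinian R ((localCohomology I n).obj M) := by
  induction I using IsNoetherian.induction with
  | hgt I ih =>
    obtain rfl | hlt := hI.eq_or_lt
    · exact hart
    obtain ⟨x, hxJ, hxI⟩ := SetLike.exists_of_lt hlt
    have hspan : Ideal.span {x} ≤ J := (Ideal.span_singleton_le_iff_mem J).2 hxJ
    have hsup := ih (I ⊔ Ideal.span {x})
      (left_lt_sup.2 fun h => hxI (h (Ideal.mem_span_singleton_self x))) (sup_le hI hspan)
    obtain ⟨ψ, hψ⟩ := LocalCohomology.exists_surjective_of_sup_span (I := I) (M := M)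
      (LocalCohomology.powTorsion_eq_top_of_forall_le fun p hp => hspan.trans (hJ p hp))
    exact isArtinian_of_surjective _ ψ hψ

end

/-- over a Noetherian local ring, if `M` has Krull dimension `n` and
`H^n_m(M)` is Artinian, then `H^n_I(M)` is Artinian for every ideal `I`. -/
theorem isArtinian_localCohomology_of_isArtinian_localCohomology_maximalIdeal
    (R : Type u) [CommRing R] [IsNoetherianRing R] [IsLocalRing R]
    (M : ModuleCat.{u} R) (n : ℕ)
    (hn : Order.krullDim (Module.support R M) = (n : WithBot ℕ∞))
    (hart : IsArtinian R ((localCohomology (IsLocalRing.maximalIdeal R) n).obj M)) :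
    ∀ I : Ideal R, IsArtinian R ((localCohomology I n).obj M) := by
  intro I
  obtain rfl | hI := eq_or_ne I ⊤
  · have : Subsingleton ((localCohomology (⊤ : Ideal R) n).obj M) :=
      LocalCohomology.subsingleton_top n M
    infer_instance
  · exact isArtinian_localCohomology_of_isArtinian_localCohomology_maximalIdeal_general M n _
      (fun _ hp => maximalIdeal_le_of_krullDim_support_le hn.le hp) hart I
      (IsLocalRing.le_maximalIdeal hI)
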